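/- Let a, b, c be complex numbers such that (a+b+1)/2 is not a nonpositive integer, 2c−1 is not a nonpositive integer, and Re(2c − a − b) > 2. Then ₃F₂(a, b, c; (a+b+1)/2, 2c−1; 1) = ₃F₂(a, b, c; (a+b+1)/2, 2c; 1) + (ab/((2c−1)(a+b+1))) · ₃F₂(a+1, b+1, c+1; (a+b+3)/2, 2c+1; 1). -/

import Mathlib

open scoped Nat

/-- The generalized hypergeometric series `₃F₂(a, b, c; d, e; 1)`, defined as
`∑ₙ (a)ₙ(b)ₙ(c)ₙ / ((d)ₙ(e)ₙ n!)` where `(α)ₙ` is the Pochhammer symbol. -/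
noncomputable def hyp3F2 (a b c d e : ℂ) : ℂ :=
  ∑' n : ℕ,
    ((ascPochhammer ℂ n).eval a * (ascPochhammer ℂ n).eval b * (ascPochhammer ℂ n).eval c) /
      ((ascPochhammer ℂ n).eval d * (ascPochhammer ℂ n).eval e * (n ! : ℂ))

/-!
Since `(e)ₙ (e + n) = e (e + 1)ₙ`, raising `e` to `e + 1` changes the `n`-th term of the series
from `(1 + n / e) t` to `t`. The two series therefore differ by `∑ (n / e) t`, and there the
factor `n` cancels against `n!`, so that shifting the index leaves a multiple of the series with
`a, b, c, d` raised by `1` and `e` by `2`. The series converge because Euler's limit for `Γ(a)`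
shows that `(a)ₙ₊₁` grows like `n ^ a * n!`.
-/

open Filter Asymptotics Topology

section Pochhammer

theorem ascPochhammer_succ_eval_left {S : Type*} [CommSemiring S] (n : ℕ) (x : S) :
    (ascPochhammer S (n + 1)).eval x = x * (ascPochhammer S n).eval (x + 1) := by
  simp [ascPochhammer_succ_left]

theorem ascPochhammer_eval_eq_prod_range {S : Type*} [CommSemiring S] (n : ℕ) (x : S) :
    (ascPochhammer S n).eval x = ∏ j ∈ Finset.range n, (x + j) := by
  induction n with
  | zero => simp
  | succ n ih => rw [ascPochhammer_succ_eval, Finset.prod_range_succ, ih]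

theorem tendsto_cpow_mul_factorial_div_ascPochhammer_eval (a : ℂ) :
    Tendsto (fun n : ℕ ↦ (n : ℂ) ^ a * (n ! : ℂ) / (ascPochhammer ℂ (n + 1)).eval a) atTop
      (𝓝 (Complex.Gamma a)) := by
  simp only [ascPochhammer_eval_eq_prod_range]
  exact Complex.GammaSeq_tendsto_Gamma a

theorem natCast_cpow_isTheta_rpow_re (a : ℂ) :
    (fun n : ℕ ↦ (n : ℂ) ^ a) =Θ[atTop] fun n : ℕ ↦ (n : ℝ) ^ a.re := by
  refine .of_norm_eventuallyEq ?_
  filter_upwards [eventually_gt_atTop 0] with n hn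
  exact Complex.norm_natCast_cpow_of_pos hn a

theorem ascPochhammer_succ_eval_isTheta {a : ℂ} (ha : ∀ m : ℕ, a ≠ -(m : ℂ)) :
    (fun n : ℕ ↦ (ascPochhammer ℂ (n + 1)).eval a) =Θ[atTop]
      fun n : ℕ ↦ (n : ℝ) ^ a.re * (n ! : ℝ) := by
  have hfactorial : (fun n : ℕ ↦ (n ! : ℂ)) =Θ[atTop] fun n : ℕ ↦ (n ! : ℝ) :=
    Complex.isTheta_ofReal (fun n : ℕ ↦ (n ! : ℝ)) atTop
  exact (isTheta_of_div_tendsto_nhds_ne_zero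
    (tendsto_cpow_mul_factorial_div_ascPochhammer_eval a) (Complex.Gamma_ne_zero ha)).trans
    ((natCast_cpow_isTheta_rpow_re a).mul hfactorial)

theorem ascPochhammer_succ_eval_isBigO (a : ℂ) :
    (fun n : ℕ ↦ (ascPochhammer ℂ (n + 1)).eval a) =O[atTop]
      fun n : ℕ ↦ (n : ℝ) ^ a.re * (n ! : ℝ) := by
  by_cases! ha : ∃ m : ℕ, a = -(m : ℂ)
  · obtain ⟨m, rfl⟩ := ha
    have hzero : (fun n : ℕ ↦ (ascPochhammer ℂ (n + 1)).eval (-(m : ℂ))) =ᶠ[atTop] 0 := by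
      filter_upwards [eventually_ge_atTop m] with n hn
      exact ascPochhammer_eval_neg_coe_nat_of_lt (Nat.lt_succ_of_le hn)
    exact hzero.trans_isBigO (isBigO_zero _ _)
  · exact (ascPochhammer_succ_eval_isTheta ha).isBigO

end Pochhammer

/-- The `n`-th term of the series `₃F₂(a, b, c; d, e; 1)`. -/
noncomputable def hyp3F2Term (a b c d e : ℂ) (n : ℕ) : ℂ :=
  ((ascPochhammer ℂ n).eval a * (ascPochhammer ℂ n).eval b * (ascPochhammer ℂ n).eval c) /
    ((ascPochhammer ℂ n).eval d * (ascPochhammer ℂ n).eval e * (n ! : ℂ))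

theorem hyp3F2_eq_tsum (a b c d e : ℂ) : hyp3F2 a b c d e = ∑' n, hyp3F2Term a b c d e n :=
  rfl

section Convergence

variable {d e : ℂ}

theorem hyp3F2Term_succ_isBigO (a b c : ℂ) (hd : ∀ m : ℕ, d ≠ -(m : ℂ))
    (he : ∀ m : ℕ, e ≠ -(m : ℂ)) :
    (fun n ↦ hyp3F2Term a b c d e (n + 1)) =O[atTop]
      fun n : ℕ ↦ (n : ℝ) ^ (-(d + e - a - b - c).re - 1) := by
  have hone : ∀ m : ℕ, (1 : ℂ) ≠ -(m : ℂ) := fun m h ↦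
    m.cast_add_one_ne_zero (R := ℂ) (by rw [h]; ring)
  have hnum := ((ascPochhammer_succ_eval_isBigO a).mul (ascPochhammer_succ_eval_isBigO b)).mul
    (ascPochhammer_succ_eval_isBigO c)
  have hden := ((ascPochhammer_succ_eval_isTheta hd).mul (ascPochhammer_succ_eval_isTheta he)).mul
    (ascPochhammer_succ_eval_isTheta hone)
  refine (hnum.mul hden.inv.isBigO).congr' (.of_forall fun n ↦ ?_) ?_
  · simp only [hyp3F2Term, ascPochhammer_eval_one, div_eq_mul_inv]
  · filter_upwards [eventually_gt_atTop 0] with n hn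
    have hn' : (0 : ℝ) < n := Nat.cast_pos.mpr hn
    have hfactorial : (n ! : ℝ) ≠ 0 := Nat.cast_ne_zero.mpr n.factorial_ne_zero
    have hexponent : -(d + e - a - b - c).re - 1 =
        a.re + b.re + c.re - (d.re + e.re + (1 : ℂ).re) := by
      simp only [Complex.sub_re, Complex.add_re, Complex.one_re]; ring
    simp only [hexponent, Real.rpow_sub hn', Real.rpow_add hn']
    field_simp

theorem summable_hyp3F2Term {a b c : ℂ} (hd : ∀ m : ℕ, d ≠ -(m : ℂ))
    (he : ∀ m : ℕ, e ≠ -(m : ℂ)) (hre : 0 < (d + e - a - b - c).re) :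
    Summable (hyp3F2Term a b c d e) :=
  (summable_nat_add_iff 1).mp <| summable_of_isBigO_nat
    (Real.summable_nat_rpow.mpr (by linarith)) (hyp3F2Term_succ_isBigO a b c hd he)

end Convergence

section Contiguity

variable (a b c d : ℂ) {e : ℂ}

theorem hyp3F2Term_succ (e : ℂ) (n : ℕ) :
    hyp3F2Term a b c d e (n + 1) = a * b * c / (d * e * (n + 1)) *
      hyp3F2Term (a + 1) (b + 1) (c + 1) (d + 1) (e + 1) n := by
  simp only [hyp3F2Term, ascPochhammer_succ_eval_left, Nat.factorial_succ, Nat.cast_mul,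
    Nat.cast_succ, div_mul_div_comm]
  ring

theorem hyp3F2Term_eq_mul_hyp3F2Term_add_one {n : ℕ} (he : e ≠ 0) (hen : e + n ≠ 0) :
    hyp3F2Term a b c d e n = (1 + n / e) * hyp3F2Term a b c d (e + 1) n := by
  have hpoch : (ascPochhammer ℂ n).eval (e + 1) = (ascPochhammer ℂ n).eval e * (e + n) / e := by
    rw [eq_div_iff he, ← ascPochhammer_succ_eval, ascPochhammer_succ_eval_left, mul_comm]
  rw [hyp3F2Term, hyp3F2Term, hpoch]
  field_simp

theorem hyp3F2Term_succ_sub_hyp3F2Term_add_one_succ {n : ℕ} (he : e ≠ 0)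
    (hen : e + (n + 1 : ℕ) ≠ 0) :
    hyp3F2Term a b c d e (n + 1) - hyp3F2Term a b c d (e + 1) (n + 1) =
      a * b * c / (d * e * (e + 1)) *
        hyp3F2Term (a + 1) (b + 1) (c + 1) (d + 1) (e + 2) n := by
  have hn : (n : ℂ) + 1 ≠ 0 := n.cast_add_one_ne_zero
  rw [hyp3F2Term_eq_mul_hyp3F2Term_add_one a b c d he hen, ← sub_one_mul, add_sub_cancel_left,
    hyp3F2Term_succ, add_assoc e, one_add_one_eq_two, Nat.cast_succ]
  field_simp

end Contiguity

theorem watson_contiguous_15_general (a b c d e : ℂ)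
    (hd : ∀ m : ℕ, d ≠ -(m : ℂ)) (he : ∀ m : ℕ, e ≠ -(m : ℂ))
    (hre : 0 < (d + e - a - b - c).re) :
    hyp3F2 a b c d e = hyp3F2 a b c d (e + 1) +
      a * b * c / (d * e * (e + 1)) *
        hyp3F2 (a + 1) (b + 1) (c + 1) (d + 1) (e + 2) := by
  have he' : ∀ m : ℕ, e + 1 ≠ -(m : ℂ) := fun m h ↦
    he (m + 1) (by rw [eq_sub_of_add_eq h]; push_cast; ring)
  have hsum : Summable (hyp3F2Term a b c d e) := summable_hyp3F2Term hd he hre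
  have hsum' : Summable (hyp3F2Term a b c d (e + 1)) := by
    refine summable_hyp3F2Term hd he' ?_
    simp only [Complex.sub_re, Complex.add_re, Complex.one_re] at hre ⊢
    linarith
  rw [← sub_eq_iff_eq_add']
  simp only [hyp3F2_eq_tsum]
  calc ∑' n, hyp3F2Term a b c d e n - ∑' n, hyp3F2Term a b c d (e + 1) n
      = ∑' n, (hyp3F2Term a b c d e (n + 1) - hyp3F2Term a b c d (e + 1) (n + 1)) := by
        rw [← hsum.tsum_sub hsum', (hsum.sub hsum').tsum_eq_zero_add]
        simp [hyp3F2Term]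
    _ = ∑' n, a * b * c / (d * e * (e + 1)) *
          hyp3F2Term (a + 1) (b + 1) (c + 1) (d + 1) (e + 2) n :=
        tsum_congr fun n ↦ hyp3F2Term_succ_sub_hyp3F2Term_add_one_succ a b c d
          (by simpa using he 0) fun h ↦ he (n + 1) (eq_neg_of_add_eq_zero_left h)
    _ = _ := tsum_mul_left

theorem watson_contiguous_15 (a b c : ℂ)
    (hd : ∀ m : ℕ, (a + b + 1) / 2 ≠ -(m : ℂ))
    (he : ∀ m : ℕ, 2 * c - 1 ≠ -(m : ℂ))
    (hre : (2 * c - a - b).re > 2) :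
    hyp3F2 a b c ((a + b + 1) / 2) (2 * c - 1) =
      hyp3F2 a b c ((a + b + 1) / 2) (2 * c) +
        a * b / ((2 * c - 1) * (a + b + 1)) *
          hyp3F2 (a + 1) (b + 1) (c + 1) ((a + b + 3) / 2) (2 * c + 1) := by
  have hc : c ≠ 0 := fun h ↦ he 1 (by simp [h])
  have hexcess : (a + b + 1) / 2 + (2 * c - 1) - a - b - c = (2 * c - a - b - 1) / 2 := by ring
  have hpos : 0 < ((a + b + 1) / 2 + (2 * c - 1) - a - b - c).re := by
    rw [hexcess, Complex.div_ofNat_re, Complex.sub_re, Complex.one_re]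
    linarith
  have hcoeff : a * b * c / ((a + b + 1) / 2 * (2 * c - 1) * (2 * c)) =
      a * b / ((2 * c - 1) * (a + b + 1)) := by
    field_simp
  convert watson_contiguous_15_general a b c _ _ hd he hpos using 3
  · ring
  · rw [sub_add_cancel, hcoeff]
  · congr 1 <;> ring
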